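/- Let C > 0, let E be the reliability function E(R) = C/2 − R for 0 ≤ R ≤ C/4, E(R) = (√C − √R)² for C/4 ≤ R ≤ C, and let 0 < α < 1. Then the minimum over R ∈ [0, C] of E(R) + αR equals αC/(1 + α), and it is attained at R = C/(1 + α)². -/

import Mathlib

/-- The reliability function of the infinite-bandwidth AWGN channel with capacity `C`:
`E(R) = C/2 − R` for `0 ≤ R ≤ C/4` and `E(R) = (√C − √R)²` for `C/4 ≤ R ≤ C`. -/
noncomputable def awgnE (C R : ℝ) : ℝ :=
  if R ≤ C / 4 then C / 2 - R else (Real.sqrt C - Real.sqrt R) ^ 2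

/-! Completing the square in `√R` on the curved branch gives
`(√C − √R)² + αR = αC/(1 + α) + ((1 + α)√R − √C)²/(1 + α)`, whose square vanishes exactly at
`R = C/(1 + α)²`, a point of that branch when `α ≤ 1`. On the linear branch the objective has slope
`α − 1 ≤ 0`, so it is never below its value at the junction `R = C/4`, where
the two branches agree. -/

theorem sub_sq_add_mul_sq {K : Type*} [Field K] {α : K} (hα : 1 + α ≠ 0) (s t : K) :
    (s - t) ^ 2 + α * t ^ 2 = α * s ^ 2 / (1 + α) + ((1 + α) * t - s) ^ 2 / (1 + α) := by
  field_simp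
  ring

section ReliabilityFunction

variable {C R α : ℝ}

theorem awgnE_of_le (hR : R ≤ C / 4) : awgnE C R = C / 2 - R :=
  if_pos hR

theorem awgnE_of_ge (hC : 0 ≤ C) (hR : C / 4 ≤ R) : awgnE C R = (√C - √R) ^ 2 := by
  rcases hR.eq_or_lt with rfl | hlt
  · have hsqrt : √(C / 4) = √C / 2 := by
      rw [Real.sqrt_div hC, show (4 : ℝ) = 2 ^ 2 by norm_num, Real.sqrt_sq zero_le_two]
    rw [awgnE_of_le le_rfl, hsqrt]
    linarith [Real.sq_sqrt hC]
  · exact if_neg hlt.not_ge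

theorem antitoneOn_awgnE_add_mul (hα : α ≤ 1) :
    AntitoneOn (fun R => awgnE C R + α * R) (Set.Iic (C / 4)) := by
  intro R hR R' hR' hRR'
  have hslope : 0 ≤ (1 - α) * (R' - R) := mul_nonneg (sub_nonneg.2 hα) (sub_nonneg.2 hRR')
  simp only [awgnE_of_le hR, awgnE_of_le hR']
  linarith

theorem awgnE_add_mul_of_ge (hC : 0 ≤ C) (hα : 1 + α ≠ 0) (hR : C / 4 ≤ R) :
    awgnE C R + α * R = α * C / (1 + α) + ((1 + α) * √R - √C) ^ 2 / (1 + α) := by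
  have hR0 : 0 ≤ R := by linarith
  simpa only [← awgnE_of_ge hC hR, Real.sq_sqrt hC, Real.sq_sqrt hR0] using
    sub_sq_add_mul_sq hα √C √R

theorem mul_div_le_awgnE_add_mul (hC : 0 ≤ C) (hα : 0 < 1 + α) (hα1 : α ≤ 1) (R : ℝ) :
    α * C / (1 + α) ≤ awgnE C R + α * R := by
  have hcurve : ∀ {R : ℝ}, C / 4 ≤ R → α * C / (1 + α) ≤ awgnE C R + α * R := fun hR => by
    rw [awgnE_add_mul_of_ge hC hα.ne' hR]
    exact le_add_of_nonneg_right (by positivity)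
  rcases le_total R (C / 4) with hR | hR
  · exact (hcurve le_rfl).trans (antitoneOn_awgnE_add_mul hα1 hR Set.self_mem_Iic hR)
  · exact hcurve hR

theorem awgnE_add_mul_div_sq (hC : 0 ≤ C) (hα : 0 < 1 + α) (hα1 : α ≤ 1) :
    awgnE C (C / (1 + α) ^ 2) + α * (C / (1 + α) ^ 2) = α * C / (1 + α) := by
  have hquarter : C / 4 ≤ C / (1 + α) ^ 2 :=
    div_le_div_of_nonneg_left hC (by positivity) (by nlinarith)
  have hsquare : (1 + α) * √(C / (1 + α) ^ 2) - √C = 0 := by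
    rw [Real.sqrt_div hC, Real.sqrt_sq hα.le, mul_div_cancel₀ _ hα.ne', sub_self]
  rw [awgnE_add_mul_of_ge hC hα.ne' hquarter, hsquare]
  simp

end ReliabilityFunction

/-- For `C > 0` and `0 < α < 1`, the minimum over `R ∈ [0, C]` of `E(R) + αR` equals
`αC/(1 + α)`, and it is attained at `R = C/(1 + α)²`. -/
theorem minimum_awgnE_add_mul_of_lt_one (C α : ℝ) (hC : 0 < C) (hα0 : 0 < α) (hα1 : α < 1) :
    IsLeast ((fun R => awgnE C R + α * R) '' Set.Icc (0 : ℝ) C) (α * C / (1 + α)) ∧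
    awgnE C (C / (1 + α) ^ 2) + α * (C / (1 + α) ^ 2) = α * C / (1 + α) := by
  have hα : 0 < 1 + α := by linarith
  have hattained := awgnE_add_mul_div_sq hC.le hα hα1.le
  have hmem : C / (1 + α) ^ 2 ∈ Set.Icc 0 C :=
    ⟨by positivity, div_le_self hC.le (one_le_pow₀ (by linarith))⟩
  refine ⟨⟨⟨_, hmem, hattained⟩, ?_⟩, hattained⟩
  rintro _ ⟨R, -, rfl⟩
  exact mul_div_le_awgnE_add_mul hC.le hα hα1.le R
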